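/- Let q be a prime power and let S and S′ be two distinct tangent splashes of ℓ∞ in PG(2,q³), both with centre T. Then the intersection S ∩ S′ is contained in an order-q-subline of ℓ∞ that contains T; in particular |S ∩ S′| ≤ q+1. -/

import Mathlib

namespace TangentSplashPaper

open Projectivization

/-- The point set of the projective plane `PG(2,K)`. -/
abbrev PGPoint (K : Type*) [Field K] := Projectivization K (Fin 3 → K)

/-- `ℓ` is a line of `PG(2,K)`: the set of points lying in a fixed
2-dimensional linear subspace. -/
def IsLine {K : Type*} [Field K] (ℓ : Set (PGPoint K)) : Prop :=
  ∃ W : Submodule K (Fin 3 → K), Module.finrank K W = 2 ∧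
    ℓ = {P : PGPoint K | P.submodule ≤ W}

/-- The distinguished line `ℓ∞` of `PG(2,K)`: points whose last homogeneous
coordinate vanishes. -/
def linf (K : Type*) [Field K] : Set (PGPoint K) := {P : PGPoint K | P.rep 2 = 0}

/-- The homography of `PG(2,K)` induced by a linear automorphism of `K³`;
as maps of point sets, these are exactly the elements of `PGL(3,K)`. -/
def hmap {K : Type*} [Field K] (f : (Fin 3 → K) ≃ₗ[K] (Fin 3 → K)) :
    PGPoint K → PGPoint K :=
  Projectivization.map f.toLinearMap f.injective

/-- The base subplane `PG(2,F)`: points admitting homogeneous coordinates in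
the subfield `F`. -/
def basePlane (F K : Type*) [Field F] [Field K] [Algebra F K] : Set (PGPoint K) :=
  {P : PGPoint K | ∃ v : Fin 3 → K, ∃ hv : v ≠ 0, P = Projectivization.mk K v hv ∧
    ∀ i, v i ∈ (algebraMap F K).range}

/-- An order-`q`-subplane of `PG(2,K)` (`q = |F|`): an image of `PG(2,F)`
under a homography. -/
def IsSubplane (F : Type*) {K : Type*} [Field F] [Field K] [Algebra F K]
    (S : Set (PGPoint K)) : Prop :=
  ∃ f : (Fin 3 → K) ≃ₗ[K] (Fin 3 → K), S = hmap f '' basePlane F K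

/-- An order-`q`-subline of `PG(2,K)`: the intersection of an order-`q`-subplane
with a line of `PG(2,K)` meeting it in `q+1` points. -/
def IsSubline (F : Type*) {K : Type*} [Field F] [Field K] [Algebra F K] (q : ℕ)
    (b : Set (PGPoint K)) : Prop :=
  ∃ S ℓ : Set (PGPoint K), IsSubplane F S ∧ IsLine ℓ ∧
    (S ∩ ℓ).ncard = q + 1 ∧ b = S ∩ ℓ

/-- The splash of a subplane `π` on `ℓ∞`: all points of `ℓ∞` lying on a line
of `PG(2,K)` spanned by two points of `π`. -/
def splash {K : Type*} [Field K] (π : Set (PGPoint K)) : Set (PGPoint K) :=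
  {X : PGPoint K | X ∈ linf K ∧ ∃ P Q : PGPoint K, P ∈ π ∧ Q ∈ π ∧ P ≠ Q ∧
    ∃ ℓ : Set (PGPoint K), IsLine ℓ ∧ P ∈ ℓ ∧ Q ∈ ℓ ∧ X ∈ ℓ}

/-- `S` is a tangent splash of `ℓ∞` with centre `T`: `S` is the splash of some
order-`q`-subplane meeting `ℓ∞` exactly in the point `T`. -/
def IsTangentSplash (F : Type*) {K : Type*} [Field F] [Field K] [Algebra F K]
    (S : Set (PGPoint K)) (T : PGPoint K) : Prop :=
  ∃ π : Set (PGPoint K), IsSubplane F π ∧ π ∩ linf K = {T} ∧ S = splash π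

/-- The set `t_P`: points of `ℓ∞` lying on the extension of a line of the
subplane `π` through the point `P` (lines of `π` are the lines of `PG(2,K)`
meeting `π` in `q+1` points). -/
def pencilTrace {K : Type*} [Field K] (q : ℕ) (π : Set (PGPoint K))
    (P : PGPoint K) : Set (PGPoint K) :=
  {X : PGPoint K | X ∈ linf K ∧ ∃ ℓ : Set (PGPoint K), IsLine ℓ ∧ P ∈ ℓ ∧
    (π ∩ ℓ).ncard = q + 1 ∧ X ∈ ℓ}

section helpers

variable {F K : Type} [Field F] [Field K] [Algebra F K]

local notation "ι" => algebraMap F K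

lemma mk_eq_iff {v w : Fin 3 → K} (hv : v ≠ 0) (hw : w ≠ 0) :
    (Projectivization.mk K v hv = Projectivization.mk K w hw) ↔ ∃ c : K, v = c • w := by
  rw [Projectivization.mk_eq_mk_iff']
  constructor
  · rintro ⟨c, h⟩; exact ⟨c, h.symm⟩
  · rintro ⟨c, h⟩; exact ⟨c, h.symm⟩

lemma mk_mem_linf {v : Fin 3 → K} (hv : v ≠ 0) :
    Projectivization.mk K v hv ∈ linf K ↔ v 2 = 0 := by
  obtain ⟨a, ha⟩ := Projectivization.exists_smul_eq_mk_rep K v hv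
  simp only [linf, Set.mem_setOf_eq, ← ha]
  simp [Units.smul_def]

lemma exists_matrix (u : Fin 3 → F) (hu : u ≠ 0) :
    ∃ M : Matrix (Fin 3) (Fin 3) F, M 0 = u ∧ M.det ≠ 0 := by
  obtain ⟨i, hi⟩ := Function.ne_iff.mp hu
  fin_cases i
  · refine ⟨Matrix.of ![u, ![0,1,0], ![0,0,1]], rfl, ?_⟩
    rw [Matrix.det_fin_three]; simpa using hi
  · refine ⟨Matrix.of ![u, ![1,0,0], ![0,0,1]], rfl, ?_⟩
    rw [Matrix.det_fin_three]; simpa using hi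
  · refine ⟨Matrix.of ![u, ![1,0,0], ![0,1,0]], rfl, ?_⟩
    rw [Matrix.det_fin_three]; simpa using hi

lemma mem_subplane (f : (Fin 3 → K) ≃ₗ[K] (Fin 3 → K)) (v : Fin 3 → K) (hv : v ≠ 0) :
    Projectivization.mk K v hv ∈ hmap f '' basePlane F K ↔
      ∃ k : K, ∃ u : Fin 3 → F, v = k • f (fun i => ι (u i)) := by
  constructor
  · rintro ⟨_, ⟨w, hw, rfl, hr⟩, h⟩
    choose u hu using hr
    rw [hmap, Projectivization.map_mk] at h
    obtain ⟨c, hc⟩ := (mk_eq_iff _ _).1 h.symm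
    refine ⟨c, u, ?_⟩
    rw [hc]
    have : w = fun i => ι (u i) := by ext i; exact (hu i).symm
    rw [← this]; rfl
  · rintro ⟨k, u, rfl⟩
    have h0 : (fun i => ι (u i)) ≠ (0 : Fin 3 → K) := by
      rintro h; apply hv; simp [h]
    refine ⟨Projectivization.mk K _ h0, ⟨_, h0, rfl, fun i => ⟨u i, rfl⟩⟩, ?_⟩
    rw [hmap, Projectivization.map_mk]
    symm
    exact (mk_eq_iff _ _).2 ⟨k, rfl⟩

lemma normal_form {π : Set (PGPoint K)} (hπ : IsSubplane F π) (t : Fin 3 → K) (ht : t ≠ 0)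
    (hT : Projectivization.mk K t ht ∈ π) :
    ∃ w1 w2 : Fin 3 → K,
      (∀ α β γ : K, α • t + β • w1 + γ • w2 = 0 → α = 0 ∧ β = 0 ∧ γ = 0) ∧
      ∀ v (hv : v ≠ 0), Projectivization.mk K v hv ∈ π ↔
        ∃ k : K, ∃ x y z : F, v = k • (ι x • t + ι y • w1 + ι z • w2) := by
  obtain ⟨f, rfl⟩ := hπ
  obtain ⟨c, u, hu⟩ := (mem_subplane f t ht).1 hT
  have hc : c ≠ 0 := by rintro rfl; simp at hu; exact ht hu
  have hu0 : u ≠ 0 := by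
    rintro rfl
    apply ht
    rw [hu]
    have : (fun i => ι ((0 : Fin 3 → F) i)) = (0 : Fin 3 → K) := by ext; simp
    rw [this]; simp
  obtain ⟨M, hM0, hM⟩ := exists_matrix u hu0
  have key : ∀ α β γ : K, α • t + β • (c • f (fun i => ι (M 1 i))) + γ • (c • f (fun i => ι (M 2 i)))
      = c • f (Matrix.vecMul ![α, β, γ] (M.map ι)) := by
    intro α β γ
    rw [hu, ← hM0]
    have : Matrix.vecMul ![α, β, γ] (M.map ι) =
      α • (fun i => ι (M 0 i)) + β • (fun i => ι (M 1 i)) + γ • (fun i => ι (M 2 i)) := by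
      ext i; simp [Matrix.vecMul, dotProduct, Fin.sum_univ_three]
    rw [this]
    simp only [map_add, map_smul, smul_add, smul_comm c]
  refine ⟨c • f (fun i => ι (M 1 i)), c • f (fun i => ι (M 2 i)), ?_, ?_⟩
  · intro α β γ h
    rw [key] at h
    have h1 : Matrix.vecMul ![α, β, γ] (M.map ι) = 0 := by
      rcases smul_eq_zero.1 h with h | h
      · exact absurd h hc
      · simpa using h
    have hd : (M.map ι).det ≠ 0 := by
      have : (M.map ι).det = ι M.det := by
        rw [RingHom.map_det]; rfl
      rw [this]; simpa using hM
    have h2 := Matrix.eq_zero_of_vecMul_eq_zero hd h1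
    exact ⟨congrFun h2 0, congrFun h2 1, congrFun h2 2⟩
  · intro v hv
    rw [mem_subplane]
    constructor
    · rintro ⟨k, u', h⟩
      set x := Matrix.vecMul u' M⁻¹ with hx
      have hx' : Matrix.vecMul x M = u' := by
        rw [hx, Matrix.vecMul_vecMul, Matrix.nonsing_inv_mul _ (isUnit_iff_ne_zero.2 hM)]
        simp
      refine ⟨k * c⁻¹, x 0, x 1, x 2, ?_⟩
      rw [key, h, smul_smul, mul_assoc, inv_mul_cancel₀ hc, mul_one]
      congr 2
      ext i
      rw [← hx']
      simp [Matrix.vecMul, dotProduct, Fin.sum_univ_three]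
    · rintro ⟨k, x, y, z, h⟩
      refine ⟨k * c, Matrix.vecMul ![x, y, z] M, ?_⟩
      rw [h, key, smul_smul]
      congr 2
      ext i
      simp [Matrix.vecMul, dotProduct, Fin.sum_univ_three]

lemma line_dep {W : Submodule K (Fin 3 → K)} (hW : Module.finrank K W = 2)
    {p r v : Fin 3 → K} (hp : p ∈ W) (hr : r ∈ W) (hv : v ∈ W)
    (hr0 : r ≠ 0) (hpr : ∀ c : K, p ≠ c • r) : ∃ α β : K, v = α • p + β • r := by
  have hli : LinearIndependent K ![p, r] := by
    rw [LinearIndependent.pair_iff]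
    intro a b h
    have ha : a = 0 := by
      by_contra ha
      apply hpr (-(a⁻¹ * b))
      have : p = a⁻¹ • (a • p + b • r) - (a⁻¹ * b) • r := by
        rw [smul_add, smul_smul, smul_smul, inv_mul_cancel₀ ha]; simp
      rw [this, h]; simp
    subst ha
    simp [hr0] at h
    exact ⟨rfl, h⟩
  have hle : Submodule.span K {p, r} ≤ W := by
    rw [Submodule.span_le]
    rintro x (rfl | rfl) <;> assumption
  have hfr : Module.finrank K (Submodule.span K {p, r}) = 2 := by
    have := finrank_span_eq_card hli
    rw [Matrix.range_cons_cons_empty] at this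
    simpa using this
  have := Submodule.eq_of_le_of_finrank_eq hle (by rw [hfr, hW])
  rw [← this, Submodule.mem_span_pair] at hv
  obtain ⟨a, b, h⟩ := hv
  exact ⟨a, b, h.symm⟩

lemma exists_line {p r : Fin 3 → K} (hp0 : p ≠ 0) (hr0 : r ≠ 0) (hpr : ∀ a b : K, a • p + b • r = 0 → a = 0 ∧ b = 0) :
    ∃ ℓ : Set (PGPoint K), IsLine ℓ ∧ Projectivization.mk K p hp0 ∈ ℓ ∧
      Projectivization.mk K r hr0 ∈ ℓ ∧
      ∀ a b : K, ∀ h : a • p + b • r ≠ 0, Projectivization.mk K (a • p + b • r) h ∈ ℓ := by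
  have hli : LinearIndependent K ![p, r] := by
    rw [LinearIndependent.pair_iff]
    exact hpr
  have hfr : Module.finrank K (Submodule.span K {p, r}) = 2 := by
    have := finrank_span_eq_card hli
    rw [Matrix.range_cons_cons_empty] at this
    simpa using this
  refine ⟨_, ⟨_, hfr, rfl⟩, ?_, ?_, ?_⟩
  · simp only [Set.mem_setOf_eq, Projectivization.submodule_mk, Submodule.span_singleton_le_iff_mem]
    exact Submodule.subset_span (by simp)
  · simp only [Set.mem_setOf_eq, Projectivization.submodule_mk, Submodule.span_singleton_le_iff_mem]
    exact Submodule.subset_span (by simp)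
  · intro a b h
    simp only [Set.mem_setOf_eq, Projectivization.submodule_mk, Submodule.span_singleton_le_iff_mem]
    exact Submodule.mem_span_pair.2 ⟨a, b, rfl⟩

lemma splash_form {S : Set (PGPoint K)} (t s : Fin 3 → K) (ht : t ≠ 0) (hs2 : s 2 = 0)
    (hd : t 0 * s 1 - t 1 * s 0 ≠ 0)
    (hS : IsTangentSplash F S (Projectivization.mk K t ht)) :
    ∃ z0 a b : K, (∀ x y : F, ι x * a + ι y * b = 0 → x = 0 ∧ y = 0) ∧
      ∀ v (hv : v ≠ 0), Projectivization.mk K v hv ∈ S ↔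
        (∃ k : K, v = k • t) ∨
        ∃ k : K, ∃ x y : F, v = k • ((z0 + (ι x * a + ι y * b)) • t + s) := by
  obtain ⟨π, hπ, hint, rfl⟩ := hS
  have hTm : Projectivization.mk K t ht ∈ π ∩ linf K := by rw [hint]; rfl
  have ht2 : t 2 = 0 := (mk_mem_linf ht).1 hTm.2
  obtain ⟨w1, w2, hli, hmem⟩ := normal_form hπ t ht hTm.1
  -- independence of third coordinates
  have hab : ∀ x y : F, ι x * w1 2 + ι y * w2 2 = 0 → x = 0 ∧ y = 0 := by
    intro x y h
    by_cases h0 : ι x • w1 + ι y • w2 = 0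
    · have := hli 0 (ι x) (ι y) (by simpa using h0)
      simpa using this.2
    · have h1 : Projectivization.mk K _ h0 ∈ π ∩ linf K := by
        refine ⟨(hmem _ _).2 ⟨1, 0, x, y, by simp⟩, (mk_mem_linf _).2 (by simpa only [Pi.add_apply, Pi.smul_apply, smul_eq_mul] using h)⟩
      rw [hint] at h1
      obtain ⟨c, hc⟩ := (mk_eq_iff _ _).1 h1
      have := hli (-c) (ι x) (ι y) (by rw [add_assoc, hc]; simp)
      simpa using this.2
  have hb0 : w2 2 ≠ 0 := by
    intro h
    have := (hab 0 1 (by simp [h])).2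
    simp at this
  have ha0 : w1 2 ≠ 0 := by
    intro h
    have := (hab 1 0 (by simp [h])).1
    simp at this
  obtain ⟨κ, δ, hn⟩ : ∃ κ δ : K, w2 2 • w1 - w1 2 • w2 = κ • s + δ • t := by
    set n := w2 2 • w1 - w1 2 • w2 with hn
    have hn2 : n 2 = 0 := by simp [hn, mul_comm]
    clear_value n
    refine ⟨(t 0 * n 1 - t 1 * n 0) / (t 0 * s 1 - t 1 * s 0),
      (n 0 * s 1 - n 1 * s 0) / (t 0 * s 1 - t 1 * s 0), ?_⟩
    ext i
    fin_cases i
    · simp; field_simp; ring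
    · simp; field_simp; ring
    · simp [hn2, hs2, ht2]
  have hκ : κ ≠ 0 := by
    rintro rfl
    have := hli (-δ) (w2 2) (-w1 2) (by
      have : w2 2 • w1 - w1 2 • w2 - δ • t = 0 := by rw [hn]; simp
      rw [← this]; module)
    exact hb0 this.2.1
  refine ⟨δ / κ, w1 2 / κ, w2 2 / κ, ?_, ?_⟩
  · intro x y h
    apply hab
    field_simp at h
    simpa using h
  have hw1 : w1 = (w2 2)⁻¹ • (w1 2 • w2 + κ • s + δ • t) := by
    have : w1 2 • w2 + κ • s + δ • t = w2 2 • w1 := by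
      rw [add_assoc, ← hn]; module
    rw [this, smul_smul, inv_mul_cancel₀ hb0, one_smul]
  have hw1nz : w1 ≠ 0 := fun h => ha0 (by simp [h])
  have hw2nz : w2 ≠ 0 := fun h => hb0 (by simp [h])
  have hsv : ∀ x y : F, (δ / κ + (ι x * (w1 2 / κ) + ι y * (w2 2 / κ))) • t + s
      = κ⁻¹ • ((ι x * w1 2 + ι y * w2 2) • t + (w2 2 • w1 - w1 2 • w2)) := by
    intro x y
    rw [hn, smul_add, smul_add, smul_smul, smul_smul, smul_smul, inv_mul_cancel₀ hκ]
    match_scalars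
    · field_simp
      ring
    · simp
  intro v hv
  constructor
  · rintro ⟨hv2, P, Q, hP, hQ, hPQ, ℓ, ⟨W, hW, rfl⟩, hPl, hQl, hXl⟩
    rw [mk_mem_linf] at hv2
    induction P using Projectivization.ind with | h p hp =>
    induction Q using Projectivization.ind with | h r hr =>
    simp only [Set.mem_setOf_eq, Projectivization.submodule_mk,
      Submodule.span_singleton_le_iff_mem] at hPl hQl hXl
    obtain ⟨α, β, hαβ⟩ := line_dep hW hPl hQl hXl hr (fun c hc => hPQ ((mk_eq_iff _ _).2 ⟨c, hc⟩))
    have hnot : ¬ (p 2 = 0 ∧ r 2 = 0) := by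
      rintro ⟨h1, h2⟩
      have e1 : Projectivization.mk K p hp ∈ π ∩ linf K := ⟨hP, (mk_mem_linf _).2 h1⟩
      have e2 : Projectivization.mk K r hr ∈ π ∩ linf K := ⟨hQ, (mk_mem_linf _).2 h2⟩
      rw [hint] at e1 e2
      exact hPQ (e1.trans e2.symm)
    obtain ⟨k, x0, x1, x2, hpe⟩ := (hmem _ _).1 hP
    obtain ⟨l, y0, y1, y2, hre⟩ := (hmem _ _).1 hQ
    have hsum : α * p 2 + β * r 2 = 0 := by
      have := congrFun hαβ 2
      rw [hv2] at this
      simpa using this.symm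
    obtain ⟨μ, hμ⟩ : ∃ μ : K, v = μ • (r 2 • p - p 2 • r) := by
      by_cases hp2 : p 2 = 0
      · have hr2 : r 2 ≠ 0 := fun h => hnot ⟨hp2, h⟩
        have hβ : β = 0 := by simpa [hp2, hr2] using hsum
        refine ⟨α / r 2, ?_⟩
        rw [hαβ, hβ, hp2]
        simp [smul_smul, div_mul_cancel₀ _ hr2]
      · refine ⟨-β / p 2, ?_⟩
        rw [hαβ]
        have : α = -β * r 2 / p 2 := by field_simp; linear_combination hsum
        rw [this]
        match_scalars <;> field_simp
    have hp2 : p 2 = k * (ι x1 * w1 2 + ι x2 * w2 2) := by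
      rw [hpe]; simp [ht2, Algebra.smul_def]
    have hr2 : r 2 = l * (ι y1 * w1 2 + ι y2 * w2 2) := by
      rw [hre]; simp [ht2, Algebra.smul_def]
    have hfin : v = (μ * k * l) • (ι (x1 * y2 - x2 * y1) • (w2 2 • w1 - w1 2 • w2) +
        (ι (x0 * y1 - x1 * y0) * w1 2 + ι (x0 * y2 - x2 * y0) * w2 2) • t) := by
      rw [hμ, hp2, hr2, hpe, hre]
      simp only [map_sub, map_mul]
      generalize w1 2 = a
      generalize w2 2 = b
      module
    by_cases hD : x1 * y2 - x2 * y1 = 0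
    · left
      rw [hD] at hfin
      exact ⟨(μ * k * l) * (ι (x0 * y1 - x1 * y0) * w1 2 + ι (x0 * y2 - x2 * y0) * w2 2), by
        rw [mul_smul]; simpa using hfin⟩
    · right
      refine ⟨μ * k * l * ι (x1 * y2 - x2 * y1) * κ, (x0 * y1 - x1 * y0) / (x1 * y2 - x2 * y1),
        (x0 * y2 - x2 * y0) / (x1 * y2 - x2 * y1), ?_⟩
      have hD' : ι (x1 * y2 - x2 * y1) ≠ 0 := (map_ne_zero _).2 hD
      rw [hsv, hfin]
      simp only [map_div₀]
      generalize ι (x1 * y2 - x2 * y1) = D at *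
      generalize ι (x0 * y1 - x1 * y0) = m1 at *
      generalize ι (x0 * y2 - x2 * y0) = m2 at *
      generalize w2 2 • w1 - w1 2 • w2 = n at *
      match_scalars <;> field_simp
  · rintro (⟨k, h⟩ | ⟨k, x, y, h⟩)
    · have hT : Projectivization.mk K v hv = Projectivization.mk K t ht := (mk_eq_iff _ _).2 ⟨k, h⟩
      rw [hT]
      obtain ⟨ℓ, hℓ, h1, h2, -⟩ := exists_line ht hw1nz (fun a b hab => by
        have := hli a b 0 (by simpa using hab); exact ⟨this.1, this.2.1⟩)
      refine ⟨hTm.2, _, _, hTm.1, (hmem w1 hw1nz).2 ⟨1, 0, 1, 0, by simp⟩, ?_, ℓ, hℓ, h1, h2, h1⟩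
      intro he
      obtain ⟨c, hc⟩ := (mk_eq_iff _ _).1 he
      have := hli 1 (-c) 0 (by rw [hc]; simp)
      simp at this
    · have hP0 : ι y • t + w1 ≠ 0 := fun h => ha0 (by simpa [ht2] using congrFun h 2)
      have hQ0 : (-ι x) • t + w2 ≠ 0 := fun h => hb0 (by simpa [ht2] using congrFun h 2)
      have hind : ∀ a b : K, a • (ι y • t + w1) + b • ((-ι x) • t + w2) = 0 → a = 0 ∧ b = 0 := by
        intro a b hab
        exact (hli (a * ι y + b * (-ι x)) a b (by rw [← hab]; module)).2
      obtain ⟨ℓ, hℓ, h1, h2, h3⟩ := exists_line hP0 hQ0 hind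
      have hv' : v = (k * κ⁻¹ * w2 2) • (ι y • t + w1) + (-(k * κ⁻¹ * w1 2)) • ((-ι x) • t + w2) := by
        rw [h, hsv]
        generalize w1 2 = a
        generalize w2 2 = b
        module
      refine ⟨(mk_mem_linf _).2 ?_, _, _, (hmem _ hP0).2 ⟨1, y, 1, 0, by simp⟩,
        (hmem _ hQ0).2 ⟨1, -x, 0, 1, by simp⟩, ?_, ℓ, hℓ, h1, h2, ?_⟩
      · rw [h]; simp [ht2, hs2]
      · intro he
        obtain ⟨c, hc⟩ := (mk_eq_iff _ _).1 he
        have := (hind 1 (-c) (by rw [hc]; module)).1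
        simp at this
      · have := h3 (k * κ⁻¹ * w2 2) (-(k * κ⁻¹ * w1 2)) (by rw [← hv']; exact hv)
        convert this using 2

lemma splash_form' {S : Set (PGPoint K)} (t s : Fin 3 → K) (ht : t ≠ 0) (hs2 : s 2 = 0)
    (hd : t 0 * s 1 - t 1 * s 0 ≠ 0)
    (hS : IsTangentSplash F S (Projectivization.mk K t ht)) :
    ∃ z0 : K, ∃ V : Submodule F K, Module.finrank F V = 2 ∧
      ∀ v (hv : v ≠ 0), Projectivization.mk K v hv ∈ S ↔
        (∃ k : K, v = k • t) ∨
        ∃ k z : K, z - z0 ∈ V ∧ v = k • (z • t + s) := by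
  obtain ⟨z0, a, b, hab, hm⟩ := splash_form t s ht hs2 hd hS
  refine ⟨z0, Submodule.span F {a, b}, ?_, ?_⟩
  · have hli : LinearIndependent F ![a, b] := by
      rw [LinearIndependent.pair_iff]
      intro x y h
      exact hab x y (by simpa [Algebra.smul_def] using h)
    have := finrank_span_eq_card hli
    rw [Matrix.range_cons_cons_empty] at this
    simpa using this
  · intro v hv
    rw [hm]
    refine or_congr Iff.rfl ⟨?_, ?_⟩
    · rintro ⟨k, x, y, h⟩
      exact ⟨k, _, Submodule.mem_span_pair.2 ⟨x, y, by simp [Algebra.smul_def]⟩, h⟩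
    · rintro ⟨k, z, hz, h⟩
      obtain ⟨x, y, hxy⟩ := Submodule.mem_span_pair.1 hz
      refine ⟨k, x, y, ?_⟩
      rw [h]
      congr 3
      simp only [Algebra.smul_def] at hxy
      linear_combination -hxy

lemma isLine_linf : IsLine (linf K) := by
  refine ⟨LinearMap.ker (LinearMap.proj (R := K) (φ := fun _ : Fin 3 => K) 2), ?_, ?_⟩
  · have h := LinearMap.finrank_range_add_finrank_ker
      (LinearMap.proj (R := K) (φ := fun _ : Fin 3 => K) 2)
    have hr : LinearMap.range (LinearMap.proj (R := K) (φ := fun _ : Fin 3 => K) 2) = ⊤ :=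
      LinearMap.range_eq_top.2 (LinearMap.proj_surjective 2)
    rw [hr] at h
    simp at h
    omega
  · ext P
    induction P using Projectivization.ind with | h p hp =>
    rw [mk_mem_linf]
    simp [Projectivization.submodule_mk, Submodule.span_singleton_le_iff_mem]

lemma ts_indep (t s : Fin 3 → K) (hd : t 0 * s 1 - t 1 * s 0 ≠ 0) (a b : K)
    (h : a • t + b • s = 0) : a = 0 ∧ b = 0 := by
  have h0 : a * t 0 + b * s 0 = 0 := by simpa using congrFun h 0
  have h1 : a * t 1 + b * s 1 = 0 := by simpa using congrFun h 1
  constructor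
  · apply (mul_eq_zero.1 (?_ : a * (t 0 * s 1 - t 1 * s 0) = 0)).resolve_right hd
    linear_combination s 1 * h0 - s 0 * h1
  · apply (mul_eq_zero.1 (?_ : b * (t 0 * s 1 - t 1 * s 0) = 0)).resolve_right hd
    linear_combination t 0 * h1 - t 1 * h0

lemma exists_subline [Fintype F] (q : ℕ) (hF : Fintype.card F = q)
    (t s : Fin 3 → K) (ht : t ≠ 0) (ht2 : t 2 = 0) (hs2 : s 2 = 0)
    (hd : t 0 * s 1 - t 1 * s 0 ≠ 0) (z1 c : K) (hc : c ≠ 0) :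
    ∃ b : Set (PGPoint K), IsSubline F q b ∧ b ⊆ linf K ∧ b.ncard = q + 1 ∧
      ∀ v (hv : v ≠ 0), Projectivization.mk K v hv ∈ b ↔
        (∃ k : K, v = k • t) ∨
        ∃ k : K, ∃ x : F, v = k • ((z1 + ι x * c) • t + s) := by
  let g : (Fin 3 → K) →ₗ[K] (Fin 3 → K) :=
    Fintype.linearCombination K ![c • t, z1 • t + s, ![0, 0, 1]]
  have hg : ∀ x, g x = x 0 • (c • t) + x 1 • (z1 • t + s) + x 2 • ![0, 0, 1] := by
    intro x
    simp [g, Fintype.linearCombination_apply, Fin.sum_univ_three]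
  have hg2 : ∀ x, g x 2 = x 2 := by
    intro x; rw [hg]; simp [ht2, hs2]
  have hinj : Function.Injective g := by
    rw [← LinearMap.ker_eq_bot, LinearMap.ker_eq_bot']
    intro x hx
    have h2 : x 2 = 0 := by rw [← hg2 x, hx]; rfl
    rw [hg, h2] at hx
    obtain ⟨h3, h4⟩ := ts_indep t s hd (x 0 * c + x 1 * z1) (x 1) (by rw [← hx]; module)
    have h5 : x 0 = 0 := by simpa [h4, hc] using h3
    ext i; fin_cases i <;> assumption
  let f := LinearEquiv.ofInjectiveEndo g hinj
  have hf : ∀ x, f x = g x := fun x => rfl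
  have hmem : ∀ v (hv : v ≠ 0), Projectivization.mk K v hv ∈ (hmap f '' basePlane F K) ∩ linf K ↔
        (∃ k : K, v = k • t) ∨
        ∃ k : K, ∃ x : F, v = k • ((z1 + ι x * c) • t + s) := by
    intro v hv
    rw [Set.mem_inter_iff, mem_subplane, mk_mem_linf]
    constructor
    · rintro ⟨⟨k, u, h⟩, hv2⟩
      have hk : k ≠ 0 := by rintro rfl; simp at h; exact hv h
      have hu2 : ι (u 2) = 0 := by
        rw [h, hf, Pi.smul_apply, hg2] at hv2
        simpa [hk] using hv2
      rw [hf, hg, hu2] at h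
      by_cases hu1 : u 1 = 0
      · left
        exact ⟨k * ι (u 0) * c, by rw [h, hu1, map_zero]; module⟩
      · right
        refine ⟨k * ι (u 1), u 0 / u 1, ?_⟩
        have : ι (u 1) ≠ 0 := by simpa using hu1
        rw [h, map_div₀]
        generalize ι (u 1) = y at *
        match_scalars <;> field_simp <;> ring
    · rintro (⟨k, h⟩ | ⟨k, x, h⟩)
      · refine ⟨⟨k * c⁻¹, ![1, 0, 0], ?_⟩, by rw [h]; simp [ht2]⟩
        rw [hf, hg, h]
        simp [smul_smul, hc]
      · refine ⟨⟨k, ![x, 1, 0], ?_⟩, by rw [h]; simp [ht2, hs2]⟩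
        rw [hf, hg, h]
        simp
        module
  have hnz : ∀ z : K, z • t + s ≠ 0 := by
    intro z h
    have := (ts_indep t s hd z 1 (by simpa using h)).2
    simp at this
  have hcard : ((hmap f '' basePlane F K) ∩ linf K).ncard = q + 1 := by
    have heq : (hmap f '' basePlane F K) ∩ linf K = insert (Projectivization.mk K t ht)
        ((fun x : F => Projectivization.mk K _ (hnz (z1 + ι x * c))) '' Set.univ) := by
      ext P
      induction P using Projectivization.ind with | h p hp =>
      rw [hmem, Set.mem_insert_iff, mk_eq_iff]
      refine or_congr Iff.rfl ?_
      constructor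
      · rintro ⟨k, x, h⟩
        exact ⟨x, trivial, ((mk_eq_iff _ _).2 ⟨k, h⟩).symm⟩
      · rintro ⟨x, -, h⟩
        obtain ⟨k, hk⟩ := (mk_eq_iff _ _).1 h.symm
        exact ⟨k, x, hk⟩
    rw [heq, Set.ncard_insert_of_notMem _ (Set.toFinite _), Set.ncard_image_of_injective,
      Set.ncard_univ, Nat.card_eq_fintype_card, hF]
    · intro x y h
      obtain ⟨k, hk⟩ := (mk_eq_iff _ _).1 h
      obtain ⟨h1, h2⟩ := ts_indep t s hd ((z1 + ι x * c) - k * (z1 + ι y * c)) (1 - k) (by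
        rw [← sub_eq_zero] at hk; rw [← hk]; module)
      have hk1 : k = 1 := by linear_combination -h2
      subst hk1
      apply (algebraMap F K).injective
      apply mul_right_cancel₀ hc
      linear_combination h1
    · rintro ⟨x, -, h⟩
      obtain ⟨k, hk⟩ := (mk_eq_iff _ _).1 h
      obtain ⟨h1, h2⟩ := ts_indep t s hd ((z1 + ι x * c) - k) 1 (by
        rw [← sub_eq_zero] at hk; rw [← hk]; module)
      simp at h2
  exact ⟨_, ⟨_, _, ⟨f, rfl⟩, isLine_linf, hcard, rfl⟩, Set.inter_subset_right, hcard, hmem⟩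

lemma exists_dir (V V' : Submodule F K) (hV : Module.finrank F V = 2)
    (hV' : Module.finrank F V' = 2) (hne : V ≠ V') :
    ∃ c : K, c ≠ 0 ∧ ∀ w ∈ V, w ∈ V' → ∃ x : F, w = ι x * c := by
  have : FiniteDimensional F V := FiniteDimensional.of_finrank_pos (by omega)
  have : FiniteDimensional F V' := FiniteDimensional.of_finrank_pos (by omega)
  have hle : Module.finrank F (V ⊓ V' : Submodule F K) ≤ 1 := by
    by_contra hcon
    have h1 : Module.finrank F (V ⊓ V' : Submodule F K) ≤ Module.finrank F V :=
      Submodule.finrank_mono inf_le_left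
    have e1 : V ⊓ V' = V := Submodule.eq_of_le_of_finrank_eq inf_le_left (by omega)
    have e2 : V ⊓ V' = V' := Submodule.eq_of_le_of_finrank_eq inf_le_right (by omega)
    exact hne (e1.symm.trans e2)
  have : FiniteDimensional F (V ⊓ V' : Submodule F K) :=
    Submodule.finiteDimensional_of_le (S₂ := V) inf_le_left
  obtain ⟨c, hc⟩ := finrank_le_one_iff.1 hle
  by_cases h0 : (c : K) = 0
  · refine ⟨1, one_ne_zero, fun w h h' => ⟨0, ?_⟩⟩
    obtain ⟨x, hx⟩ := hc ⟨w, h, h'⟩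
    have := congrArg Subtype.val hx
    simp [h0] at this
    simp [← this]
  · refine ⟨c, h0, fun w h h' => ?_⟩
    obtain ⟨x, hx⟩ := hc ⟨w, h, h'⟩
    have := congrArg Subtype.val hx
    exact ⟨x, by simpa [Algebra.smul_def] using this.symm⟩

end helpers

/-- two distinct tangent splashes with a common centre `T` meet in a
subset of an order-`q`-subline of `ℓ∞` through `T`; in particular they share at most
`q+1` points. -/
theorem statement13 (q : ℕ) (F K : Type) [Field F] [Field K] [Fintype F] [Fintype K]
    [Algebra F K] (hF : Fintype.card F = q) (hK : Fintype.card K = q ^ 3)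
    (S S' : Set (PGPoint K)) (T : PGPoint K)
    (hS : IsTangentSplash F S T) (hS' : IsTangentSplash F S' T) (hne : S ≠ S') :
    (∃ b : Set (PGPoint K), IsSubline F q b ∧ b ⊆ linf K ∧ T ∈ b ∧ S ∩ S' ⊆ b) ∧
    (S ∩ S').ncard ≤ q + 1 := by
  induction T using Projectivization.ind with | h t ht =>
  have ht2 : t 2 = 0 := by
    obtain ⟨π, -, hint, -⟩ := hS
    have : Projectivization.mk K t ht ∈ π ∩ linf K := by rw [hint]; rfl
    exact (mk_mem_linf ht).1 this.2
  obtain ⟨s, hs2, hd⟩ : ∃ s : Fin 3 → K, s 2 = 0 ∧ t 0 * s 1 - t 1 * s 0 ≠ 0 := by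
    by_cases h0 : t 0 = 0
    · refine ⟨![1, 0, 0], by simp, ?_⟩
      intro h
      apply ht
      ext i
      fin_cases i
      · exact h0
      · simpa using h
      · exact ht2
    · exact ⟨![0, 1, 0], by simp, by simpa using h0⟩
  obtain ⟨z0, V, hV, hm⟩ := splash_form' t s ht hs2 hd hS
  obtain ⟨z0', V', hV', hm'⟩ := splash_form' t s ht hs2 hd hS'
  suffices h : ∃ z1 c : K, c ≠ 0 ∧ ∀ z, z - z0 ∈ V → z - z0' ∈ V' →
      ∃ x : F, z = z1 + algebraMap F K x * c by
    obtain ⟨z1, c, hc, hz⟩ := h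
    obtain ⟨b, hb, hbl, hbc, hbm⟩ := exists_subline (F := F) q hF t s ht ht2 hs2 hd z1 c hc
    have hsub : S ∩ S' ⊆ b := by
      intro P
      induction P using Projectivization.ind with | h p hp =>
      rintro ⟨h1, h2⟩
      rw [hm] at h1
      rw [hm'] at h2
      rw [hbm]
      rcases h1 with h1 | ⟨k, z, hzV, h1⟩
      · exact Or.inl h1
      rcases h2 with h2 | ⟨k', z', hzV', h2⟩
      · exact Or.inl h2
      right
      obtain ⟨e1, e2⟩ := ts_indep t s hd (k * z - k' * z') (k - k') (by
        rw [← sub_eq_zero.2 (h1.symm.trans h2)]; module)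
      have hk : k ≠ 0 := by rintro rfl; simp at h1; exact hp h1
      have hkk : k = k' := sub_eq_zero.1 e2
      subst hkk
      have hzz : z = z' := mul_left_cancel₀ hk (sub_eq_zero.1 e1)
      subst hzz
      obtain ⟨x, hx⟩ := hz z hzV hzV'
      exact ⟨k, x, by rw [h1, hx]⟩
    refine ⟨⟨b, hb, hbl, (hbm _ _).2 (Or.inl ⟨1, by simp⟩), hsub⟩, ?_⟩
    rw [← hbc]
    exact Set.ncard_le_ncard hsub (Set.finite_of_ncard_ne_zero (by omega))
  by_cases hex : ∃ z, z - z0 ∈ V ∧ z - z0' ∈ V'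
  · obtain ⟨z1, h1, h1'⟩ := hex
    have hVV : V ≠ V' := by
      rintro rfl
      apply hne
      have hdiff : z0 - z0' ∈ V := by
        have := V.sub_mem h1' h1
        simpa using this
      ext P
      induction P using Projectivization.ind with | h p hp =>
      rw [hm, hm']
      refine or_congr Iff.rfl (exists_congr fun k => exists_congr fun z => and_congr_left fun _ => ?_)
      have : z - z0' = (z - z0) + (z0 - z0') := by ring
      rw [this, V.add_mem_iff_left hdiff]
    obtain ⟨c, hc, hcw⟩ := exists_dir V V' hV hV' hVV
    refine ⟨z1, c, hc, fun z hz hz' => ?_⟩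
    obtain ⟨x, hx⟩ := hcw (z - z1) (by simpa using V.sub_mem hz h1)
      (by simpa using V'.sub_mem hz' h1')
    exact ⟨x, by rw [← hx]; ring⟩
  · exact ⟨0, 1, one_ne_zero, fun z h h' => absurd ⟨z, h, h'⟩ hex⟩

end TangentSplashPaper
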